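/- For every positive integer k there exist constants γ_k > 0, μ_k > 0 and a threshold n₀(k) such that the following holds for all n ≥ n₀(k). Let A and C be mutually avoiding n-element point sets in ℝ² (every line through two distinct points of A is disjoint from the convex hull of C, and every line through two distinct points of C is disjoint from the convex hull of A), and let B be an n-element point set in ℝ² such that no line through two distinct points of A and no line through two distinct points of C intersects the convex hull of B. If the set T of all collinear triples (a,b,c) with a ∈ A, b ∈ B, c ∈ C satisfies |T| ≥ μ_k · n^{2−γ_k}, then T contains a k-complete collinear triple arrangement (a k-system). -/

import Mathlib

/-!
Fix a base point `b₀ ∈ B`. Since no line spanned by `A` meets the convex hull of `B`, the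
orientation of `(b, a, a')` does not depend on `b ∈ B` (`orient_pos_congr`), and likewise for `C`.
A collinear triple `(a, b, c)` makes `c` the image of `a` under central projection from `b`, and such
projections respect orientation up to the signs of their ratios. After splitting the triples into 27
position classes (the sides of `a` and `c` relative to the horizontal line through `b₀`, and whether
`b` separates `a` from `c`), each `b` therefore induces an order-preserving injective partial map
from `A` to `C`, for fixed linear orders given by the angle seen from `b₀` (`slopeKey_mono`).
Moreover, two triples through `b` with distinct points `a` determine `b` (`center_unique`).

The rest is combinatorics on triples `(x, b, y) ∈ ℕ × B × ℕ` (`exists_system_nat`). Cut both orders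
into `N ≈ n / m` blocks of length `m ≈ n ^ γ`. A monotone map meets only `O(N)` of the `N ^ 2` cells
(pairs of blocks), so most triples lie in cells containing at least `k` triples with the same `b`.
Recording the positions of `k` such triples inside the two blocks labels each rich `(I, b, J)` by one
of `m ^ (2 k)` labels. For a popular label, `(I, J)` determines `b`, so it gives a dense bipartite
graph on the blocks; the Kővári–Sós–Turán bound (`exists_biclique`) yields a `K_{k,k}` in it. Shifting
the common label to the chosen blocks gives the `k`-system.
-/

/-- Points of the Euclidean plane. -/
abbrev Pt : Type := ℝ × ℝ

/-- The line through two points, as a set. -/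
def lineThrough (p q : Pt) : Set Pt :=
  (affineSpan ℝ ({p, q} : Set Pt) : AffineSubspace ℝ Pt)

/-- Every line through two distinct points of `P` is disjoint from the convex hull of `Q`. -/
def AvoidsHull (P Q : Finset Pt) : Prop :=
  ∀ p ∈ P, ∀ q ∈ P, p ≠ q → Disjoint (lineThrough p q) (convexHull ℝ (Q : Set Pt))

/-- A `k`-complete collinear triple arrangement (`k`-system) in `T ⊆ A × B × C`:
`k` pairwise disjoint `k`-element sequences `As 1, …, As k` of distinct points of `A`,
`k` pairwise disjoint `k`-element sequences `Cs 1, …, Cs k` of distinct points of `C`,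
and points `bs i j ∈ B` such that `(As i ℓ, bs i j, Cs j (rev ℓ)) ∈ T` for all `i, j, ℓ`,
where `rev` reverses the order of `Fin k` (0-indexed version of `ℓ ↦ k - ℓ + 1`). -/
def IsKSystem (A B C : Finset Pt) (T : Set (Pt × Pt × Pt)) (k : ℕ)
    (As Cs bs : Fin k → Fin k → Pt) : Prop :=
  (Function.Injective fun p : Fin k × Fin k => As p.1 p.2) ∧
  (∀ i ℓ : Fin k, As i ℓ ∈ A) ∧
  (Function.Injective fun p : Fin k × Fin k => Cs p.1 p.2) ∧
  (∀ j ℓ : Fin k, Cs j ℓ ∈ C) ∧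
  (∀ i j : Fin k, bs i j ∈ B) ∧
  (∀ i j ℓ : Fin k, (As i ℓ, bs i j, Cs j ℓ.rev) ∈ T)

/-! ### Combinatorics: bicliques and monotone partial maps -/

theorem card_noninj_le (p N : ℕ) (i j : Fin (p + 1)) (hij : i ≠ j) :
    ((Fintype.piFinset fun _ : Fin (p + 1) => Finset.range N).filter
      (fun f => f i = f j)).card ≤ N ^ p := by
  have h : (Fintype.piFinset fun _ : Fin p => Finset.range N).card = N ^ p := by
    simp
  rw [← h]
  refine Finset.card_le_card_of_injOn (fun f => fun x => f (j.succAbove x)) ?_ ?_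
  · intro f hf
    simp only [Finset.coe_filter, Fintype.mem_piFinset, Set.mem_ofPred_eq, Finset.mem_coe] at hf ⊢
    exact fun x => hf.1 _
  · intro f hf g hg hfg
    simp only [Finset.coe_filter, Set.mem_ofPred_eq] at hf hg
    have key : ∀ x, x ≠ j → f x = g x := by
      intro x hx
      obtain ⟨y, rfl⟩ := Fin.exists_succAbove_eq hx
      exact congrFun hfg y
    funext x
    by_cases hx : x = j
    · rw [hx, ← hf.2, ← hg.2]; exact key i hij
    · exact key x hx

/-- The Kővári–Sós–Turán bound, by counting pairs of a `k`-tuple of left vertices and a common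
neighbour; at most `k ^ 2 * N ^ (k - 1)` of the tuples have a repeated entry. -/
theorem exists_biclique (k N : ℕ) (hk : 0 < k) (G : Finset (ℕ × ℕ))
    (hG : ∀ e ∈ G, e.1 < N ∧ e.2 < N)
    (hcard : 2 * k ^ 2 * N ^ (2 * k - 1) < G.card ^ k) :
    ∃ I J : Fin k → ℕ, Function.Injective I ∧ Function.Injective J ∧
      ∀ i j, (I i, J j) ∈ G := by
  obtain ⟨p, rfl⟩ : ∃ p, k = p + 1 := ⟨k - 1, by omega⟩
  by_contra hno
  set V := Finset.range N with hV
  set W := Fintype.piFinset fun _ : Fin (p + 1) => V with hW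
  have hWc : W.card = N ^ (p + 1) := by simp [hW, hV]
  -- Degrees sum to the number of edges.
  have h1 : G.card = ∑ J ∈ V, (V.filter fun I => (I, J) ∈ G).card := by
    rw [Finset.card_eq_sum_card_fiberwise (f := Prod.snd) (t := V)
      (fun e he => by simpa [hV] using (hG e he).2)]
    refine Finset.sum_congr rfl fun J _ => ?_
    refine Finset.card_bij' (fun e _ => e.1) (fun I _ => (I, J)) ?_ ?_ ?_ ?_
    · rintro ⟨I, J'⟩ he
      simp only [Finset.mem_filter] at he ⊢
      obtain ⟨he, rfl⟩ := he
      exact ⟨by simpa [hV] using (hG _ he).1, he⟩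
    · intro I hI
      simp only [Finset.mem_filter] at hI ⊢
      exact ⟨hI.2, trivial⟩
    · rintro ⟨I, J'⟩ he
      simp only [Finset.mem_filter] at he
      simp [he.2]
    · intro I _
      rfl
  have h2 : G.card ^ (p + 1) ≤
      N ^ p * ∑ J ∈ V, (V.filter fun I => (I, J) ∈ G).card ^ (p + 1) := by
    have := pow_sum_le_card_mul_sum_pow (s := V)
      (f := fun J => (V.filter fun I => (I, J) ∈ G).card) (fun _ _ => Nat.zero_le _) p
    rw [← h1] at this
    simpa [hV] using this
  -- Double count stars: pairs of a `k`-tuple and a common neighbour.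
  have h3 : ∑ J ∈ V, (V.filter fun I => (I, J) ∈ G).card ^ (p + 1) =
      ∑ f ∈ W, (V.filter fun J => ∀ l, (f l, J) ∈ G).card := by
    have h := Finset.sum_card_bipartiteAbove_eq_sum_card_bipartiteBelow (s := W) (t := V)
      (fun f J => ∀ l, (f l, J) ∈ G)
    simp only [Finset.bipartiteAbove, Finset.bipartiteBelow] at h
    rw [h]
    refine Finset.sum_congr rfl fun J _ => ?_
    have : W.filter (fun f => ∀ l, (f l, J) ∈ G) =
        Fintype.piFinset fun _ : Fin (p + 1) => V.filter fun I => (I, J) ∈ G := by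
      ext f
      simp only [hW, Finset.mem_filter, Fintype.mem_piFinset]
      exact ⟨fun h l => ⟨h.1 l, h.2 l⟩, fun h => ⟨fun l => (h l).1, fun l => (h l).2⟩⟩
    rw [this]
    simp
  have hinj : ∀ f ∈ W, Function.Injective f →
      (V.filter fun J => ∀ l, (f l, J) ∈ G).card ≤ p + 1 := by
    intro f _ hf
    by_contra hlt
    push Not at hlt
    obtain ⟨S, hS, hSc⟩ := Finset.exists_subset_card_eq hlt.le
    refine hno ⟨f, S.orderEmbOfFin hSc, hf, (S.orderEmbOfFin hSc).injective, fun i j => ?_⟩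
    exact (Finset.mem_filter.1 (hS (S.orderEmbOfFin_mem hSc j))).2 i
  have hnon : (W.filter fun f => ¬ Function.Injective f).card ≤ (p + 1) ^ 2 * N ^ p := by
    have hsub : (W.filter fun f => ¬ Function.Injective f) ⊆
        ((Finset.univ : Finset (Fin (p + 1) × Fin (p + 1))).filter fun q => q.1 ≠ q.2).biUnion
          fun q => W.filter fun f => f q.1 = f q.2 := by
      intro f hf
      simp only [Finset.mem_filter, Function.Injective, not_forall] at hf
      obtain ⟨hfW, i, j, hfij, hij⟩ := hf
      simp only [Finset.mem_biUnion, Finset.mem_filter, Finset.mem_univ, true_and]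
      exact ⟨(i, j), hij, hfW, hfij⟩
    refine (Finset.card_le_card hsub).trans ((Finset.card_biUnion_le_card_mul _ _ (N ^ p) ?_).trans ?_)
    · intro q hq
      exact card_noninj_le p N q.1 q.2 (Finset.mem_filter.1 hq).2
    · gcongr
      refine (Finset.card_filter_le _ _).trans ?_
      simp [sq]
  have h4 : ∑ f ∈ W, (V.filter fun J => ∀ l, (f l, J) ∈ G).card ≤
      (p + 1) * N ^ (p + 1) + (p + 1) ^ 2 * N ^ p * N := by
    rw [← Finset.sum_filter_add_sum_filter_not W Function.Injective]
    refine add_le_add ?_ ?_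
    · refine (Finset.sum_le_card_nsmul _ _ (p + 1) ?_).trans ?_
      · intro f hf
        exact hinj f (Finset.mem_filter.1 hf).1 (Finset.mem_filter.1 hf).2
      · rw [smul_eq_mul, mul_comm, ← hWc]
        gcongr
        exact Finset.filter_subset _ _
    · refine (Finset.sum_le_card_nsmul _ _ N ?_).trans ?_
      · intro f _
        exact (Finset.card_filter_le _ _).trans (by simp [hV])
      · rw [smul_eq_mul]
        gcongr
  have h5 : G.card ^ (p + 1) ≤ 2 * (p + 1) ^ 2 * N ^ (2 * (p + 1) - 1) := by
    have he : 2 * (p + 1) - 1 = p + (p + 1) := by omega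
    calc G.card ^ (p + 1) ≤ N ^ p * ((p + 1) * N ^ (p + 1) + (p + 1) ^ 2 * N ^ p * N) := by
          refine h2.trans ?_
          rw [h3]
          gcongr
      _ ≤ N ^ p * ((p + 1) ^ 2 * N ^ (p + 1) + (p + 1) ^ 2 * N ^ p * N) := by
          gcongr
          nlinarith
      _ = 2 * (p + 1) ^ 2 * N ^ (2 * (p + 1) - 1) := by
          rw [he]; ring
  omega

theorem exists_large_fiber {α β : Type*} [DecidableEq β] (s : Finset α) (t : Finset β)
    (f : α → β) (ht : t.Nonempty) (hf : ∀ x ∈ s, f x ∈ t) :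
    ∃ y ∈ t, s.card ≤ t.card * (s.filter fun x => f x = y).card := by
  by_contra hno
  push Not at hno
  have h := Finset.sum_lt_sum_of_nonempty ht hno
  rw [← Finset.mul_sum, ← Finset.card_eq_sum_card_fiberwise (f := f) hf] at h
  simp at h

/-- The combinatorial core. Here `E` encodes the monotone partial maps `a ↦ c` indexed by `b`
(`hmono` also makes them well defined and injective), and `huniq` says that two pairs `(a, c)`,
`(a', c')` determine `b`. Blocks have length `m`, and there are at most `n / m + 1` of them. -/
theorem exists_system_nat {β : Type*} (k m n : ℕ) (hk : 2 ≤ k) (hm : 0 < m)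
    (B : Finset β) (hB : B.card ≤ n) (E : Finset (ℕ × β × ℕ))
    (hE : ∀ a b c, (a, b, c) ∈ E → a < n ∧ b ∈ B ∧ c < n)
    (hmono : ∀ a b c a' c', (a, b, c) ∈ E → (a', b, c') ∈ E → (a < a' ↔ c < c'))
    (huniq : ∀ a a' c c' b b', a ≠ a' → (a, b, c) ∈ E → (a', b, c') ∈ E →
      (a, b', c) ∈ E → (a', b', c') ∈ E → b = b')
    (h1 : 4 * k * (n / m + 1) * n ≤ E.card)
    (h2 : 2 * k ^ 2 * (n / m + 1) ^ (2 * k - 1) * (2 * m ^ (2 * k + 1)) ^ k < E.card ^ k) :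
    ∃ (As Cs : Fin k → Fin k → ℕ) (bs : Fin k → Fin k → β),
      (Function.Injective fun p : Fin k × Fin k => As p.1 p.2) ∧
      (Function.Injective fun p : Fin k × Fin k => Cs p.1 p.2) ∧
      ∀ i j l : Fin k, (As i l, bs i j, Cs j l.rev) ∈ E := by
  classical
  set N := n / m + 1 with hN
  have hdiv : ∀ x, x < n → x / m < N := fun x hx =>
    Nat.lt_succ_of_le (Nat.div_le_div_right hx.le)
  set π : ℕ × β × ℕ → ℕ × β × ℕ := fun t => (t.1 / m, t.2.1, t.2.2 / m) with hπ
  set P := E.image π with hP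
  -- Cells met by the graph of one monotone map form a chain, on which `I + J` is injective.
  have hPcard : P.card ≤ 2 * N * n := by
    have hle : P.card ≤ (Finset.range (2 * N) ×ˢ B).card := by
      refine Finset.card_le_card_of_injOn (fun p => (p.1 + p.2.2, p.2.1)) ?_ ?_
      · intro p hp
        obtain ⟨⟨a, b, c⟩, ht, rfl⟩ := Finset.mem_image.1 (Finset.mem_coe.1 hp)
        obtain ⟨ha, hb, hc⟩ := hE a b c ht
        have := hdiv a ha
        have := hdiv c hc
        simp only [hπ, Finset.mem_coe, Finset.mem_product, Finset.mem_range]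
        exact ⟨by omega, hb⟩
      · intro p hp p' hp' heq
        obtain ⟨⟨a, b, c⟩, ht, rfl⟩ := Finset.mem_image.1 (Finset.mem_coe.1 hp)
        obtain ⟨⟨a', b', c'⟩, ht', rfl⟩ := Finset.mem_image.1 (Finset.mem_coe.1 hp')
        simp only [hπ, Prod.mk.injEq] at heq ⊢
        obtain ⟨hsum, rfl⟩ := heq
        have m1 := hmono _ _ _ _ _ ht ht'
        have m2 := hmono _ _ _ _ _ ht' ht
        rcases lt_or_ge a a' with h | h
        · have e1 := Nat.div_le_div_right (c := m) h.le
          have e2 := Nat.div_le_div_right (c := m) (m1.1 h).le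
          exact ⟨by omega, rfl, by omega⟩
        · have e1 := Nat.div_le_div_right (c := m) h
          have e2 := Nat.div_le_div_right (c := m) (show c' ≤ c by by_contra hh; omega)
          exact ⟨by omega, rfl, by omega⟩
    rw [Finset.card_product, Finset.card_range] at hle
    exact hle.trans (Nat.mul_le_mul_left _ hB)
  have hfib : ∀ p ∈ P, (E.filter fun t => π t = p).card ≤ m := by
    intro p _
    calc _ ≤ (Finset.range m).card := by
          refine Finset.card_le_card_of_injOn (fun t => t.1 % m) ?_ ?_
          · intro t _
            simpa using Nat.mod_lt _ hm
          · rintro ⟨a, b, c⟩ ht ⟨a', b', c'⟩ ht' heq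
            simp only [Finset.coe_filter, Set.mem_ofPred_eq, hπ] at ht ht' heq
            obtain ⟨ht, rfl⟩ := ht
            obtain ⟨ht', hpp⟩ := ht'
            simp only [Prod.mk.injEq] at hpp
            obtain ⟨ha, rfl, hc⟩ := hpp
            have haa : a = a' := by
              rw [← Nat.div_add_mod a m, ← Nat.div_add_mod a' m, ha, heq]
            subst haa
            have m1 := hmono _ _ _ _ _ ht ht'
            have m2 := hmono _ _ _ _ _ ht' ht
            have : c = c' := by omega
            rw [this]
      _ = m := Finset.card_range m
  set R := P.filter fun p => k ≤ (E.filter fun t => π t = p).card with hR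
  have hRcard : E.card ≤ 2 * m * R.card := by
    have hsum : E.card ≤ R.card * m + P.card * k := by
      rw [Finset.card_eq_sum_card_image π E, ← hP,
        ← Finset.sum_filter_add_sum_filter_not P
          (fun p => k ≤ (E.filter fun t => π t = p).card)]
      refine add_le_add ?_ ?_
      · rw [← smul_eq_mul]
        exact Finset.sum_le_card_nsmul _ _ _ fun p hp => hfib p (Finset.mem_filter.1 hp).1
      · refine (Finset.sum_le_card_nsmul _ _ k fun p hp => ?_).trans ?_
        · exact (not_le.1 (Finset.mem_filter.1 hp).2).le
        · rw [smul_eq_mul]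
          exact Nat.mul_le_mul_right _ (Finset.card_filter_le _ _)
    have : P.card * k ≤ 2 * N * n * k := Nat.mul_le_mul_right _ hPcard
    nlinarith
  -- A rich cell contains `k` triples; their residues mod `m` are recorded as its label.
  have hlab : ∀ p, ∃ xy : (Fin k → Fin m) × (Fin k → Fin m), p ∈ R →
      Function.Injective xy.1 ∧ Function.Injective xy.2 ∧
      ∀ l, (m * p.1 + (xy.1 l : ℕ), p.2.1, m * p.2.2 + (xy.2 l.rev : ℕ)) ∈ E := by
    intro p
    by_cases hp : p ∈ R
    · obtain ⟨S, hS, hSc⟩ := Finset.exists_subset_card_eq (Finset.mem_filter.1 hp).2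
      have e : Fin k ≃ S := (S.equivFinOfCardEq hSc).symm
      have hmem : ∀ l, (e l : ℕ × β × ℕ) ∈ E ∧ π (e l) = p := fun l =>
        Finset.mem_filter.1 (hS (e l).2)
      have ha : ∀ l, m * p.1 + (e l : ℕ × β × ℕ).1 % m = (e l : ℕ × β × ℕ).1 := by
        intro l
        have := congrArg Prod.fst (hmem l).2
        rw [← this]
        exact Nat.div_add_mod _ _
      have hc : ∀ l, m * p.2.2 + (e l : ℕ × β × ℕ).2.2 % m = (e l : ℕ × β × ℕ).2.2 := by
        intro l
        have := congrArg (fun t => t.2.2) (hmem l).2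
        simp only [hπ] at this
        rw [← this]
        exact Nat.div_add_mod _ _
      have hb : ∀ l, (e l : ℕ × β × ℕ).2.1 = p.2.1 := fun l =>
        congrArg (fun t => t.2.1) (hmem l).2
      have hE' : ∀ l, ((e l : ℕ × β × ℕ).1, p.2.1, (e l : ℕ × β × ℕ).2.2) ∈ E := by
        intro l
        rw [← hb l]
        exact (hmem l).1
      refine ⟨(fun l => ⟨_, Nat.mod_lt (e l : ℕ × β × ℕ).1 hm⟩,
        fun l => ⟨_, Nat.mod_lt (e l.rev : ℕ × β × ℕ).2.2 hm⟩), fun _ => ⟨?_, ?_, ?_⟩⟩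
      · intro l l' h
        simp only [Fin.mk.injEq] at h
        have haa : (e l : ℕ × β × ℕ).1 = (e l' : ℕ × β × ℕ).1 := by
          rw [← ha l, ← ha l', h]
        have m1 := hmono _ _ _ _ _ (hE' l) (hE' l')
        have m2 := hmono _ _ _ _ _ (hE' l') (hE' l)
        refine e.injective (Subtype.ext (Prod.ext haa (Prod.ext ?_ ?_)))
        · rw [hb, hb]
        · omega
      · intro l l' h
        simp only [Fin.mk.injEq] at h
        have hcc : (e l.rev : ℕ × β × ℕ).2.2 = (e l'.rev : ℕ × β × ℕ).2.2 := by
          rw [← hc, ← hc l'.rev, h]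
        have m1 := hmono _ _ _ _ _ (hE' l.rev) (hE' l'.rev)
        have m2 := hmono _ _ _ _ _ (hE' l'.rev) (hE' l.rev)
        refine Fin.rev_injective (e.injective (Subtype.ext (Prod.ext ?_ (Prod.ext ?_ hcc))))
        · omega
        · rw [hb, hb]
      · intro l
        simp only [Fin.rev_rev, ha, hc]
        exact hE' l
    · exact ⟨(fun _ => ⟨0, hm⟩, fun _ => ⟨0, hm⟩), fun h => absurd h hp⟩
  choose lab hlab using hlab
  obtain ⟨⟨x, y⟩, -, hxy⟩ := exists_large_fiber R Finset.univ lab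
    ⟨(fun _ => ⟨0, hm⟩, fun _ => ⟨0, hm⟩), Finset.mem_univ _⟩ (fun _ _ => Finset.mem_univ _)
  set S := R.filter fun p => lab p = (x, y) with hS
  have hcardlab : (Finset.univ : Finset ((Fin k → Fin m) × (Fin k → Fin m))).card =
      m ^ (2 * k) := by
    simp [two_mul, pow_add]
  rw [hcardlab] at hxy
  have hSp : ∀ p ∈ S, Function.Injective x ∧ Function.Injective y ∧
      ∀ l, (m * p.1 + (x l : ℕ), p.2.1, m * p.2.2 + (y l.rev : ℕ)) ∈ E := by
    intro p hp
    obtain ⟨hpR, hpl⟩ := Finset.mem_filter.1 hp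
    have := hlab p hpR
    rwa [hpl] at this
  set G := S.image fun p => (p.1, p.2.2) with hG
  have hGcard : G.card = S.card := by
    refine Finset.card_image_of_injOn ?_
    rintro ⟨I, b, J⟩ hp ⟨I', b', J'⟩ hp' heq
    simp only [Prod.mk.injEq] at heq
    obtain ⟨rfl, rfl⟩ := heq
    obtain ⟨hx, -, hp⟩ := hSp _ hp
    obtain ⟨-, -, hp'⟩ := hSp _ hp'
    -- There are two positions because `2 ≤ k`, and two triples determine the centre.
    have hne : x ⟨0, by omega⟩ ≠ x ⟨1, by omega⟩ := fun h => by
      simpa using hx h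
    have hbb : b = b' := huniq _ _ _ _ b b'
      (fun h => hne (Fin.ext (Nat.add_left_cancel h))) (hp _) (hp _) (hp' _) (hp' _)
    rw [hbb]
  have hGlt : ∀ e ∈ G, e.1 < N ∧ e.2 < N := by
    intro e he
    obtain ⟨p, hp, rfl⟩ := Finset.mem_image.1 he
    obtain ⟨⟨a, b, c⟩, ht, rfl⟩ :=
      Finset.mem_image.1 (Finset.mem_filter.1 (Finset.mem_filter.1 hp).1).1
    obtain ⟨ha, -, hc⟩ := hE a b c ht
    exact ⟨hdiv a ha, hdiv c hc⟩
  have hEG : E.card ≤ 2 * m ^ (2 * k + 1) * G.card := by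
    calc E.card ≤ 2 * m * R.card := hRcard
      _ ≤ 2 * m * (m ^ (2 * k) * S.card) := Nat.mul_le_mul_left _ hxy
      _ = 2 * m ^ (2 * k + 1) * G.card := by rw [hGcard]; ring
  have hbig : 2 * k ^ 2 * N ^ (2 * k - 1) < G.card ^ k := by
    have h3 := h2.trans_le (Nat.pow_le_pow_left hEG k)
    rw [mul_pow _ G.card, mul_comm _ (G.card ^ k)] at h3
    exact lt_of_mul_lt_mul_right h3 (Nat.zero_le _)
  obtain ⟨I, J, hI, hJ, hIJ⟩ := exists_biclique k N (by omega) G hGlt hbig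
  have hb : ∀ i j, ∃ b, (I i, b, J j) ∈ S := by
    intro i j
    obtain ⟨⟨I', b, J'⟩, hp, heq⟩ := Finset.mem_image.1 (hIJ i j)
    simp only [Prod.mk.injEq] at heq
    obtain ⟨rfl, rfl⟩ := heq
    exact ⟨b, hp⟩
  choose bs hbs using hb
  have hinj : ∀ (K : Fin k → ℕ) (z : Fin k → Fin m), Function.Injective K →
      Function.Injective z →
      Function.Injective fun p : Fin k × Fin k => m * K p.1 + (z p.2 : ℕ) := by
    rintro K z hK hz ⟨i, l⟩ ⟨i', l'⟩ h
    simp only at h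
    have hd := congrArg (· / m) h
    have hmod := congrArg (· % m) h
    simp only [Nat.mul_add_div hm, Nat.div_eq_of_lt (z l).2, Nat.div_eq_of_lt (z l').2,
      add_zero] at hd
    simp only [Nat.mul_add_mod, Nat.mod_eq_of_lt (z l).2, Nat.mod_eq_of_lt (z l').2] at hmod
    rw [hK hd, hz (Fin.ext hmod)]
  have h0 := hSp _ (hbs ⟨0, by omega⟩ ⟨0, by omega⟩)
  exact ⟨fun i l => m * I i + (x l : ℕ), fun j l => m * J j + (y l : ℕ), bs,
    hinj I x hI h0.1, hinj J y hJ h0.2.1, fun i j l => (hSp _ (hbs i j)).2.2 l⟩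

/-! ### Geometry: orientations and central projections -/

/-- Twice the signed area of the triangle `o p q`, i.e. the determinant of `p - o`, `q - o`. -/
def orient (o p q : Pt) : ℝ :=
  (p.1 - o.1) * (q.2 - o.2) - (p.2 - o.2) * (q.1 - o.1)

theorem mem_lineThrough_of_orient {o p q : Pt} (hpq : p ≠ q) (h : orient o p q = 0) :
    o ∈ lineThrough p q := by
  unfold orient at h
  suffices hr : ∃ r : ℝ, AffineMap.lineMap p q r = o by
    obtain ⟨r, rfl⟩ := hr
    exact AffineMap.lineMap_mem_affineSpan_pair r p q
  by_cases hx : q.1 - p.1 = 0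
  · have hy : q.2 - p.2 ≠ 0 := fun hy =>
      hpq (Prod.ext (by linarith) (by linarith))
    refine ⟨(o.2 - p.2) / (q.2 - p.2), ?_⟩
    rw [AffineMap.lineMap_apply]
    have h1 : (p.1 - o.1) * (q.2 - p.2) = 0 := by
      have : q.1 = p.1 := by linarith
      rw [this] at h; linarith
    have h2 : p.1 - o.1 = 0 := by
      rcases mul_eq_zero.1 h1 with h | h
      · exact h
      · exact absurd h hy
    refine Prod.ext ?_ ?_
    · simp [hx]; linarith
    · simp; field_simp; ring
  · refine ⟨(o.1 - p.1) / (q.1 - p.1), ?_⟩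
    rw [AffineMap.lineMap_apply]
    refine Prod.ext ?_ ?_
    · simp; field_simp; ring
    · simp; field_simp; linarith

theorem orient_ne_zero {P Q : Finset Pt} (h : AvoidsHull P Q) {p q o : Pt} (hp : p ∈ P)
    (hq : q ∈ P) (hpq : p ≠ q) (ho : o ∈ convexHull ℝ (Q : Set Pt)) : orient o p q ≠ 0 :=
  fun h0 => Set.disjoint_left.1 (h p hp q hq hpq) (mem_lineThrough_of_orient hpq h0) ho

/-- The side of the line `p q` is the same for all points of `Q`: otherwise some convex
combination of two points of `Q` would lie on that line. -/
theorem orient_pos_congr {P Q : Finset Pt} (h : AvoidsHull P Q) {p q o o' : Pt} (hp : p ∈ P)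
    (hq : q ∈ P) (hpq : p ≠ q) (ho : o ∈ Q) (ho' : o' ∈ Q) (hpos : 0 < orient o p q) :
    0 < orient o' p q := by
  by_contra hneg
  push Not at hneg
  set s := orient o p q with hs
  set t := orient o' p q with ht
  have hst : 0 < s - t := by linarith
  have hmem : ((-t) / (s - t)) • o + (s / (s - t)) • o' ∈ convexHull ℝ (Q : Set Pt) :=
    (convex_convexHull ℝ _) (subset_convexHull ℝ _ ho) (subset_convexHull ℝ _ ho')
      (div_nonneg (by linarith) hst.le) (div_nonneg hpos.le hst.le) (by field_simp; ring)
  refine orient_ne_zero h hp hq hpq hmem ?_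
  have haff : ∀ x y : ℝ, x + y = 1 → orient (x • o + y • o') p q = x * s + y * t := by
    intro x y hxy
    obtain rfl : y = 1 - x := by linarith
    rw [hs, ht]
    simp only [orient, Prod.fst_add, Prod.snd_add, Prod.smul_fst, Prod.smul_snd, smul_eq_mul]
    ring
  rw [haff _ _ (by field_simp; ring)]
  field_simp
  ring

theorem not_mem_of_avoidsHull {P Q : Finset Pt} (h : AvoidsHull P Q) (hP : 1 < P.card) {p : Pt}
    (hp : p ∈ P) : p ∉ Q := by
  intro hq
  obtain ⟨q, hqP, hne⟩ := Finset.exists_mem_ne hP p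
  refine orient_ne_zero h hp hqP hne.symm (subset_convexHull ℝ _ hq) ?_
  simp [orient]

/-- On a collinear triple, `q` is the image of `p` under a homothety with centre `o`. -/
theorem exists_ratio {o p q : Pt} (h : Collinear ℝ {p, o, q}) (hop : p ≠ o) (hoq : q ≠ o) :
    ∃ r : ℝ, r ≠ 0 ∧ q.1 - o.1 = r * (p.1 - o.1) ∧ q.2 - o.2 = r * (p.2 - o.2) := by
  obtain ⟨v, hv⟩ := (collinear_iff_of_mem (p₀ := o) (by simp)).1 h
  obtain ⟨x, hx⟩ := hv p (by simp)
  obtain ⟨y, hy⟩ := hv q (by simp)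
  have hx0 : x ≠ 0 := by rintro rfl; exact hop (by simpa using hx)
  have hy0 : y ≠ 0 := by rintro rfl; exact hoq (by simpa using hy)
  refine ⟨y / x, div_ne_zero hy0 hx0, ?_, ?_⟩
  · rw [hx, hy]; simp; field_simp
  · rw [hx, hy]; simp; field_simp

theorem orient_ratio {o p q p' q' : Pt} {r r' : ℝ}
    (h1 : q.1 - o.1 = r * (p.1 - o.1)) (h2 : q.2 - o.2 = r * (p.2 - o.2))
    (h1' : q'.1 - o.1 = r' * (p'.1 - o.1)) (h2' : q'.2 - o.2 = r' * (p'.2 - o.2)) :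
    orient o q q' = r * r' * orient o p p' := by
  simp only [orient, h1, h2, h1', h2']; ring

/-- The cotangent of the direction from `o` to `p`, which sorts the points strictly on one side
of the horizontal line through `o` by angle. -/
noncomputable def slopeKey (o p : Pt) : ℝ := (p.1 - o.1) / (p.2 - o.2)

/-- The side of the horizontal line through `o` on which `p` lies. -/
noncomputable def side (o p : Pt) : SignType := SignType.sign (p.2 - o.2)

/-- Two points seen from `o` on the same side are sorted by `slopeKey` as by `orient`. If both lie
on the horizontal line through `o` then `orient o p q = 0`, which is excluded. -/
theorem slopeKey_lt_iff {o p q : Pt} (hs : side o p = side o q) (hne : orient o p q ≠ 0) :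
    slopeKey o q < slopeKey o p ↔ 0 < orient o p q := by
  have h0 : 0 < (p.2 - o.2) * (q.2 - o.2) := by
    unfold side at hs
    rcases lt_trichotomy (p.2 - o.2) 0 with h | h | h
    · rw [sign_neg h] at hs
      exact mul_pos_of_neg_of_neg h (sign_eq_neg_one_iff.1 hs.symm)
    · rw [h, sign_zero] at hs
      have h' := sign_eq_zero_iff.1 hs.symm
      exact absurd (by simp [orient, h, h']) hne
    · rw [sign_pos h] at hs
      exact mul_pos h (sign_eq_one_iff.1 hs.symm)
  have hp : p.2 - o.2 ≠ 0 := left_ne_zero_of_mul h0.ne'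
  have hq : q.2 - o.2 ≠ 0 := right_ne_zero_of_mul h0.ne'
  have : slopeKey o p - slopeKey o q = orient o p q / ((p.2 - o.2) * (q.2 - o.2)) := by
    unfold slopeKey orient; field_simp
  rw [← sub_pos, this, div_pos_iff_of_pos_right h0]

theorem orient_swap (o p q : Pt) : orient o q p = - orient o p q := by
  unfold orient; ring

/-- Two lines `a c` and `a' c'` through distinct points `a, a'` meet in at most one point of `B`. -/
theorem center_unique {A B C : Finset Pt} (hAB : AvoidsHull A B) (hAC : AvoidsHull A C)
    (hA : 1 < A.card) {a a' c c' b b' : Pt} (ha : a ∈ A) (ha' : a' ∈ A) (haa : a ≠ a')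
    (hc : c ∈ C) (hc' : c' ∈ C) (hb : b ∈ B)
    (h1 : orient b a c = 0) (h2 : orient b' a c = 0)
    (h3 : orient b a' c' = 0) (h4 : orient b' a' c' = 0) : b = b' := by
  by_contra hbb
  refine orient_ne_zero hAB ha ha' haa (subset_convexHull ℝ _ hb) ?_
  -- Otherwise the lines `a c` and `a' c'` both coincide with the line `b b'`.
  have par : ∀ a c : Pt, a ≠ c → orient b a c = 0 → orient b' a c = 0 →
      (a.1 - b.1) * (b'.2 - b.2) - (a.2 - b.2) * (b'.1 - b.1) = 0 := by
    intro a c hac h1 h2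
    unfold orient at h1 h2
    by_cases hx : a.1 - c.1 = 0
    · have hy : a.2 - c.2 ≠ 0 := fun hy => hac (Prod.ext (by linarith) (by linarith))
      refine (mul_eq_zero.1 ?_).resolve_left hy
      linear_combination (-a.2 + b.2) * h2 + (a.2 - b'.2) * h1
    · refine (mul_eq_zero.1 ?_).resolve_left hx
      linear_combination (-a.1 + b.1) * h2 + (a.1 - b'.1) * h1
  have hac : a ≠ c := fun h => not_mem_of_avoidsHull hAC hA ha (h ▸ hc)
  have hac' : a' ≠ c' := fun h => not_mem_of_avoidsHull hAC hA ha' (h ▸ hc')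
  have e1 := par a c hac h1 h2
  have e2 := par a' c' hac' h3 h4
  unfold orient
  by_cases hx : b'.1 - b.1 = 0
  · have hy : b'.2 - b.2 ≠ 0 := fun hy => hbb (Prod.ext (by linarith) (by linarith))
    refine (mul_eq_zero.1 ?_).resolve_left hy
    linear_combination (a'.2 - b.2) * e1 - (a.2 - b.2) * e2
  · refine (mul_eq_zero.1 ?_).resolve_left hx
    linear_combination (a'.1 - b.1) * e1 - (a.1 - b.1) * e2

/-- Each centre `b` induces an order-preserving partial map from `A` to `C`, as long as all
positions (sides of the horizontal line through `b₀`, and the sign of the ratio of the perspectivity)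
agree. -/
theorem slopeKey_mono {A B C : Finset Pt} (hAB : AvoidsHull A B) (hCB : AvoidsHull C B)
    (hA : 1 < A.card) (hC : 1 < C.card) {a a' c c' b b₀ : Pt} (ha : a ∈ A) (ha' : a' ∈ A)
    (hc : c ∈ C) (hc' : c' ∈ C) (hb : b ∈ B) (hb₀ : b₀ ∈ B)
    (hcol : Collinear ℝ {a, b, c}) (hcol' : Collinear ℝ {a', b, c'})
    (hsa : side b₀ a = side b₀ a') (hsc : side b₀ c = side b₀ c')
    (hsr : SignType.sign ((a.1 - b.1) * (c.1 - b.1) + (a.2 - b.2) * (c.2 - b.2)) =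
      SignType.sign ((a'.1 - b.1) * (c'.1 - b.1) + (a'.2 - b.2) * (c'.2 - b.2))) :
    slopeKey b₀ a < slopeKey b₀ a' ↔ slopeKey b₀ c < slopeKey b₀ c' := by
  have hab : ∀ a ∈ A, a ≠ b := fun a ha h => not_mem_of_avoidsHull hAB hA ha (h ▸ hb)
  have hcb : ∀ c ∈ C, c ≠ b := fun c hc h => not_mem_of_avoidsHull hCB hC hc (h ▸ hb)
  obtain ⟨r, hr0, hr1, hr2⟩ := exists_ratio hcol (hab a ha) (hcb c hc)
  obtain ⟨r', hr0', hr1', hr2'⟩ := exists_ratio hcol' (hab a' ha') (hcb c' hc')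
  have hsq : ∀ a ∈ A, 0 < (a.1 - b.1) ^ 2 + (a.2 - b.2) ^ 2 := by
    intro a ha
    by_contra hle
    refine hab a ha (Prod.ext ?_ ?_) <;>
    nlinarith [sq_nonneg (a.1 - b.1), sq_nonneg (a.2 - b.2)]
  have hrr : 0 < r * r' := by
    have e : (a.1 - b.1) * (c.1 - b.1) + (a.2 - b.2) * (c.2 - b.2) =
        r * ((a.1 - b.1) ^ 2 + (a.2 - b.2) ^ 2) := by rw [hr1, hr2]; ring
    have e' : (a'.1 - b.1) * (c'.1 - b.1) + (a'.2 - b.2) * (c'.2 - b.2) =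
        r' * ((a'.1 - b.1) ^ 2 + (a'.2 - b.2) ^ 2) := by rw [hr1', hr2']; ring
    rw [e, e', sign_mul, sign_mul, sign_pos (hsq a ha), sign_pos (hsq a' ha'), mul_one,
      mul_one] at hsr
    rw [← sign_eq_one_iff, sign_mul, hsr]
    rcases lt_or_gt_of_ne hr0' with h | h
    · rw [sign_neg h]; rfl
    · rw [sign_pos h]; rfl
  have hor : orient b c' c = r * r' * orient b a' a := by
    rw [orient_ratio hr1' hr2' hr1 hr2]; ring
  by_cases haa : a = a'
  · have hcc : c = c' := by
      by_contra hne
      refine orient_ne_zero hCB hc' hc (Ne.symm hne) (subset_convexHull ℝ _ hb) ?_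
      rw [hor, haa]
      simp [orient, mul_comm]
    simp [haa, hcc]
  · have hbH := subset_convexHull ℝ (B : Set Pt) hb
    have hbH₀ := subset_convexHull ℝ (B : Set Pt) hb₀
    have hne := orient_ne_zero hAB ha' ha (Ne.symm haa) hbH
    have hcc : c' ≠ c := by
      rintro rfl
      refine mul_ne_zero hrr.ne' hne (hor.symm.trans ?_)
      simp [orient, mul_comm]
    rw [slopeKey_lt_iff hsa.symm (orient_ne_zero hAB ha' ha (Ne.symm haa) hbH₀),
      slopeKey_lt_iff hsc.symm (orient_ne_zero hCB hc' hc hcc hbH₀)]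
    calc 0 < orient b₀ a' a ↔ 0 < orient b a' a :=
          ⟨orient_pos_congr hAB ha' ha (Ne.symm haa) hb₀ hb,
            orient_pos_congr hAB ha' ha (Ne.symm haa) hb hb₀⟩
      _ ↔ 0 < orient b c' c := by rw [hor, mul_pos_iff_of_pos_left hrr]
      _ ↔ 0 < orient b₀ c' c :=
          ⟨orient_pos_congr hCB hc' hc hcc hb hb₀, orient_pos_congr hCB hc' hc hcc hb₀ hb⟩

theorem slopeKey_injOn {P Q : Finset Pt} (h : AvoidsHull P Q) {b₀ p q : Pt} (hb₀ : b₀ ∈ Q)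
    (hp : p ∈ P) (hq : q ∈ P) (hs : side b₀ p = side b₀ q)
    (he : slopeKey b₀ p = slopeKey b₀ q) : p = q := by
  by_contra hne
  have hb := subset_convexHull ℝ (Q : Set Pt) hb₀
  have h1 := (slopeKey_lt_iff hs (orient_ne_zero h hp hq hne hb)).not.1 (by rw [he]; exact lt_irrefl _)
  have h2 := (slopeKey_lt_iff hs.symm (orient_ne_zero h hq hp (Ne.symm hne) hb)).not.1
    (by rw [he]; exact lt_irrefl _)
  rw [orient_swap] at h2
  exact orient_ne_zero h hp hq hne hb (by linarith)

theorem orient_eq_zero_of_collinear {a b c : Pt} (h : Collinear ℝ {a, b, c}) :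
    orient b a c = 0 := by
  obtain ⟨v, hv⟩ := (collinear_iff_of_mem (p₀ := b) (by simp)).1 h
  obtain ⟨x, hx⟩ := hv a (by simp)
  obtain ⟨y, hy⟩ := hv c (by simp)
  rw [hx, hy]
  simp [orient]
  ring

/-! ### From the plane to ranks -/

/-- The number of points of `S` with smaller key. -/
noncomputable def keyRank (S : Finset Pt) (f : Pt → ℝ) (p : Pt) : ℕ :=
  (S.filter fun q => f q < f p).card

theorem keyRank_lt_card {S : Finset Pt} {f : Pt → ℝ} {p : Pt} (hp : p ∈ S) :
    keyRank S f p < S.card := by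
  refine Finset.card_lt_card (Finset.filter_ssubset.2 ⟨p, hp, lt_irrefl _⟩)

theorem keyRank_lt_iff {S : Finset Pt} {f : Pt → ℝ} {p q : Pt} (hp : p ∈ S) :
    keyRank S f p < keyRank S f q ↔ f p < f q := by
  constructor
  · intro h
    by_contra hle
    refine absurd h (not_lt.2 (Finset.card_le_card ?_))
    exact Finset.monotone_filter_right _ fun r _ hr => lt_of_lt_of_le hr (not_lt.1 hle)
  · intro h
    refine Finset.card_lt_card (Finset.ssubset_iff_of_subset ?_ |>.2 ⟨p, ?_, ?_⟩)
    · exact Finset.monotone_filter_right _ fun r _ hr => lt_trans hr h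
    · exact Finset.mem_filter.2 ⟨hp, h⟩
    · simp

theorem keyRank_injOn {S : Finset Pt} {f : Pt → ℝ}
    (hf : ∀ p ∈ S, ∀ q ∈ S, f p = f q → p = q) :
    Set.InjOn (keyRank S f) (S : Set Pt) := by
  intro p hp q hq h
  refine hf p hp q hq (le_antisymm ?_ ?_)
  · exact not_lt.1 fun hlt => absurd ((keyRank_lt_iff hq).2 hlt) (by omega)
  · exact not_lt.1 fun hlt => absurd ((keyRank_lt_iff hp).2 hlt) (by omega)

/-- The position class of a triple relative to the base point `b₀`: the sides of `a` and `c`,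
and the sign of the inner product of `a - b` and `c - b`, which for a collinear triple tells whether
`b` separates `a` from `c`. -/
noncomputable def posClass (b₀ : Pt) (t : Pt × Pt × Pt) : SignType × SignType × SignType :=
  (side b₀ t.1, side b₀ t.2.2,
    SignType.sign ((t.1.1 - t.2.1.1) * (t.2.2.1 - t.2.1.1) +
      (t.1.2 - t.2.1.2) * (t.2.2.2 - t.2.1.2)))

/-- The geometric reduction to `exists_system_nat`: the numerical conditions are stated for `e`,
a lower bound for the size of the most popular of the 27 position classes. -/
theorem exists_kSystem_of_card (k m n e : ℕ) (hk : 2 ≤ k) (hm : 0 < m) (hn : 2 ≤ n)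
    (A B C : Finset Pt) (hA : A.card = n) (hB : B.card = n) (hC : C.card = n)
    (hAC : AvoidsHull A C) (hAB : AvoidsHull A B) (hCB : AvoidsHull C B)
    (T : Finset (Pt × Pt × Pt))
    (hT : ∀ t ∈ T, t.1 ∈ A ∧ t.2.1 ∈ B ∧ t.2.2 ∈ C ∧ Collinear ℝ {t.1, t.2.1, t.2.2})
    (he : 27 * e ≤ T.card + 26)
    (h1 : 4 * k * (n / m + 1) * n ≤ e)
    (h2 : 2 * k ^ 2 * (n / m + 1) ^ (2 * k - 1) * (2 * m ^ (2 * k + 1)) ^ k < e ^ k) :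
    ∃ As Cs bs : Fin k → Fin k → Pt,
      IsKSystem A B C (T : Set (Pt × Pt × Pt)) k As Cs bs := by
  classical
  obtain ⟨b₀, hb₀⟩ : B.Nonempty := Finset.card_pos.1 (by omega)
  obtain ⟨⟨σ, τ, ρ⟩, -, hκ⟩ := exists_large_fiber T Finset.univ (posClass b₀)
    ⟨(0, 0, 0), Finset.mem_univ _⟩ (fun _ _ => Finset.mem_univ _)
  have h27 : (Finset.univ : Finset (SignType × SignType × SignType)).card = 27 := rfl
  rw [h27] at hκ
  set T' := T.filter fun t => posClass b₀ t = (σ, τ, ρ) with hT'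
  have hcard : e ≤ T'.card := by omega
  set A' := A.filter fun a => side b₀ a = σ with hA'
  set C' := C.filter fun c => side b₀ c = τ with hC'
  set r := keyRank A' (slopeKey b₀) with hr
  set s := keyRank C' (slopeKey b₀) with hs
  have hrinj : Set.InjOn r (A' : Set Pt) := keyRank_injOn fun p hp q hq h =>
    slopeKey_injOn hAB hb₀ (Finset.mem_filter.1 hp).1 (Finset.mem_filter.1 hq).1
      ((Finset.mem_filter.1 hp).2.trans (Finset.mem_filter.1 hq).2.symm) h
  have hsinj : Set.InjOn s (C' : Set Pt) := keyRank_injOn fun p hp q hq h =>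
    slopeKey_injOn hCB hb₀ (Finset.mem_filter.1 hp).1 (Finset.mem_filter.1 hq).1
      ((Finset.mem_filter.1 hp).2.trans (Finset.mem_filter.1 hq).2.symm) h
  have hmem : ∀ a b c, (a, b, c) ∈ T' → a ∈ A' ∧ b ∈ B ∧ c ∈ C' ∧ Collinear ℝ {a, b, c} := by
    intro a b c ht
    obtain ⟨htT, hcl⟩ := Finset.mem_filter.1 ht
    obtain ⟨ha, hb, hc, hcol⟩ := hT _ htT
    simp only [posClass, Prod.mk.injEq] at hcl
    exact ⟨Finset.mem_filter.2 ⟨ha, hcl.1⟩, hb, Finset.mem_filter.2 ⟨hc, hcl.2.1⟩, hcol⟩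
  have hinv : ∀ a b c, (a, b, c) ∈ T' →
      Function.invFunOn r (A' : Set Pt) (r a) = a ∧
      Function.invFunOn s (C' : Set Pt) (s c) = c := by
    intro a b c ht
    obtain ⟨ha, -, hc, -⟩ := hmem a b c ht
    exact ⟨hrinj.leftInvOn_invFunOn ha, hsinj.leftInvOn_invFunOn hc⟩
  set E := T'.image fun t => (r t.1, t.2.1, s t.2.2) with hE
  have hEcard : E.card = T'.card := by
    refine Finset.card_image_of_injOn ?_
    rintro ⟨a, b, c⟩ ht ⟨a', b', c'⟩ ht' h
    simp only [Prod.mk.injEq] at h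
    obtain ⟨ha, -, hc, -⟩ := hmem a b c ht
    obtain ⟨ha', -, hc', -⟩ := hmem a' b' c' ht'
    rw [hrinj ha ha' h.1, h.2.1, hsinj hc hc' h.2.2]
  have hEmem : ∀ x b y, (x, b, y) ∈ E → ∃ a c, (a, b, c) ∈ T' ∧ r a = x ∧ s c = y := by
    intro x b y h
    obtain ⟨⟨a, b', c⟩, ht, heq⟩ := Finset.mem_image.1 h
    simp only [Prod.mk.injEq] at heq
    obtain ⟨h1, rfl, h2⟩ := heq
    exact ⟨a, c, ht, h1, h2⟩
  have hAcard : A'.card ≤ n := hA ▸ Finset.card_filter_le _ _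
  have hCcard : C'.card ≤ n := hC ▸ Finset.card_filter_le _ _
  have key := exists_system_nat k m n hk hm B hB.le E
    (by
      intro x b y h
      obtain ⟨a, c, ht, rfl, rfl⟩ := hEmem x b y h
      obtain ⟨ha, hb, hc, -⟩ := hmem a b c ht
      exact ⟨(keyRank_lt_card ha).trans_le hAcard, hb, (keyRank_lt_card hc).trans_le hCcard⟩)
    (by
      intro x b y x' y' h h'
      obtain ⟨a, c, ht, rfl, rfl⟩ := hEmem x b y h
      obtain ⟨a', c', ht', rfl, rfl⟩ := hEmem x' b y' h'
      obtain ⟨ha, hb, hc, hcol⟩ := hmem a b c ht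
      obtain ⟨ha', -, hc', hcol'⟩ := hmem a' b c' ht'
      rw [hr, hs, keyRank_lt_iff ha, keyRank_lt_iff hc]
      have hcl := (Finset.mem_filter.1 ht).2.trans (Finset.mem_filter.1 ht').2.symm
      simp only [posClass, Prod.mk.injEq] at hcl
      exact slopeKey_mono hAB hCB (by omega) (by omega) (Finset.mem_filter.1 ha).1
        (Finset.mem_filter.1 ha').1 (Finset.mem_filter.1 hc).1 (Finset.mem_filter.1 hc').1
        hb hb₀ hcol hcol' hcl.1 hcl.2.1 hcl.2.2)
    (by
      intro x x' y y' b b' hne h h' g g'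
      obtain ⟨a, c, ht, rfl, rfl⟩ := hEmem _ _ _ h
      obtain ⟨a', c', ht', rfl, rfl⟩ := hEmem _ _ _ h'
      obtain ⟨a₂, c₂, hu, hra, hsc⟩ := hEmem _ _ _ g
      obtain ⟨a₂', c₂', hu', hra', hsc'⟩ := hEmem _ _ _ g'
      obtain ⟨ha, hb, hc, hcol⟩ := hmem _ _ _ ht
      obtain ⟨ha', -, hc', hcol'⟩ := hmem _ _ _ ht'
      obtain ⟨hau, hbu, hcu, hcolu⟩ := hmem _ _ _ hu
      obtain ⟨hau', -, hcu', hcolu'⟩ := hmem _ _ _ hu'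
      obtain rfl := hrinj hau ha hra
      obtain rfl := hrinj hau' ha' hra'
      obtain rfl := hsinj hcu hc hsc
      obtain rfl := hsinj hcu' hc' hsc'
      exact center_unique hAB hAC (by omega) (Finset.mem_filter.1 ha).1
        (Finset.mem_filter.1 ha').1 (fun h => hne (by rw [h])) (Finset.mem_filter.1 hc).1
        (Finset.mem_filter.1 hc').1 hb (orient_eq_zero_of_collinear hcol)
        (orient_eq_zero_of_collinear hcolu) (orient_eq_zero_of_collinear hcol')
        (orient_eq_zero_of_collinear hcolu'))
    (by rw [hEcard]; exact h1.trans hcard)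
    (by rw [hEcard]; exact h2.trans_le (Nat.pow_le_pow_left hcard k))
  obtain ⟨As, Cs, bs, hAs, hCs, hsys⟩ := key
  have hback : ∀ x b y, (x, b, y) ∈ E →
      (Function.invFunOn r (A' : Set Pt) x, b, Function.invFunOn s (C' : Set Pt) y) ∈ T' ∧
      r (Function.invFunOn r (A' : Set Pt) x) = x ∧
      s (Function.invFunOn s (C' : Set Pt) y) = y := by
    intro x b y h
    obtain ⟨a, c, ht, rfl, rfl⟩ := hEmem x b y h
    obtain ⟨e1, e2⟩ := hinv a b c ht
    rw [e1, e2]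
    exact ⟨ht, rfl, rfl⟩
  have hall := fun i j l => hback _ _ _ (hsys i j l)
  have hCr : ∀ j l, s (Function.invFunOn s (C' : Set Pt) (Cs j l)) = Cs j l ∧
      Function.invFunOn s (C' : Set Pt) (Cs j l) ∈ C := by
    intro j l
    have h := hall j j l.rev
    rw [Fin.rev_rev] at h
    exact ⟨h.2.2, (Finset.mem_filter.1 (hmem _ _ _ h.1).2.2.1).1⟩
  refine ⟨fun i l => Function.invFunOn r (A' : Set Pt) (As i l),
    fun j l => Function.invFunOn s (C' : Set Pt) (Cs j l), bs, ?_, ?_, ?_, ?_, ?_, ?_⟩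
  · intro p q h
    refine hAs ?_
    have h' := congrArg r h
    simp only at h' ⊢
    rwa [(hall p.1 p.1 p.2).2.1, (hall q.1 q.1 q.2).2.1] at h'
  · intro i l
    exact (Finset.mem_filter.1 (hmem _ _ _ (hall i i l).1).1).1
  · intro p q h
    refine hCs ?_
    have h' := congrArg s h
    simp only at h' ⊢
    rwa [(hCr p.1 p.2).1, (hCr q.1 q.2).1] at h'
  · exact fun j l => (hCr j l).2
  · intro i j
    exact (hmem _ _ _ (hall i j i).1).2.1
  · intro i j l
    exact (Finset.mem_filter.1 (hall i j l).1).1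

/-! ### Choice of parameters -/

/-- The numerical conditions of `exists_kSystem_of_card` for blocks of length `⌈q⌉₊`, where
`q = n ^ γ` with `γ = 1 / (k (2 k + 2))`. The exponent is such that the powers of `q` lost to the
labels multiply up to exactly the factor `n` gained over the biclique bound, leaving only a constant
to be absorbed by `M`. -/
theorem size_bounds (k n : ℕ) (hk : 2 ≤ k) (hn : 0 < n) (q M x : ℝ) (hq : 1 ≤ q)
    (hqn : q ^ (k * (2 * k + 2)) = n) (hM : M = k ^ 2 * 2 ^ (2 * k ^ 2 + 4 * k) + 1)
    (hx : M * n ^ 2 ≤ x * q) :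
    4 * (k : ℝ) * ((n / ⌈q⌉₊ + 1 : ℕ) : ℝ) * n ≤ x ∧
    2 * (k : ℝ) ^ 2 * ((n / ⌈q⌉₊ + 1 : ℕ) : ℝ) ^ (2 * k - 1) *
      (2 * (⌈q⌉₊ : ℝ) ^ (2 * k + 1)) ^ k < x ^ k := by
  have hn' : (0 : ℝ) < n := by exact_mod_cast hn
  have hk' : (2 : ℝ) ≤ k := by exact_mod_cast hk
  have hq0 : 0 < q := by linarith
  set m := ⌈q⌉₊ with hm
  have hm1 : q ≤ m := Nat.le_ceil q
  have hm2 : (m : ℝ) ≤ 2 * q := by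
    have := Nat.ceil_lt_add_one hq0.le
    linarith
  have hqle : q ≤ n := by
    rw [← hqn]
    exact le_self_pow₀ hq (by positivity)
  have hN : ((n / m + 1 : ℕ) : ℝ) * q ≤ 2 * n := by
    have : ((n / m : ℕ) : ℝ) ≤ n / m := Nat.cast_div_le
    have h2 : ((n / m : ℕ) : ℝ) ≤ n / q := this.trans (by gcongr)
    rw [le_div_iff₀ hq0] at h2
    push_cast
    linarith
  have hN2 : ((n / m + 1 : ℕ) : ℝ) ≤ 2 * n :=
    le_trans (le_mul_of_one_le_right (by positivity) hq) hN
  have hM1 : 8 * (k : ℝ) ≤ M := by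
    have h8 : (8 : ℝ) ≤ 2 ^ (2 * k ^ 2 + 4 * k) := by
      calc (8 : ℝ) = 2 ^ 3 := by norm_num
        _ ≤ _ := pow_le_pow_right₀ (by norm_num) (by nlinarith)
    rw [hM]
    nlinarith [mul_le_mul (show (k : ℝ) ≤ k ^ 2 by nlinarith) h8 (by norm_num) (by positivity)]
  have hM0 : 0 ≤ M := by linarith
  have hx0 : 0 ≤ x := by
    have : 0 ≤ x * q := le_trans (by positivity) hx
    exact nonneg_of_mul_nonneg_left this hq0
  constructor
  · refine le_of_mul_le_mul_right (le_trans ?_ hx) hq0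
    calc 4 * (k : ℝ) * ((n / m + 1 : ℕ) : ℝ) * n * q
        = 4 * k * n * (((n / m + 1 : ℕ) : ℝ) * q) := by ring
      _ ≤ 4 * k * n * (2 * n) := by gcongr
      _ = 8 * k * n ^ 2 := by ring
      _ ≤ M * n ^ 2 := by gcongr
  · refine lt_of_mul_lt_mul_right (a := q ^ k) ?_ (by positivity)
    obtain ⟨j, hj⟩ : ∃ j, 2 * k = j + 1 := ⟨2 * k - 1, by omega⟩
    have hj' : 2 * k - 1 = j := by omega
    rw [hj']
    calc 2 * (k : ℝ) ^ 2 * ((n / m + 1 : ℕ) : ℝ) ^ j * (2 * (m : ℝ) ^ (2 * k + 1)) ^ k * q ^ k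
        ≤ 2 * (k : ℝ) ^ 2 * (2 * n) ^ j * (2 * (2 * q) ^ (2 * k + 1)) ^ k * q ^ k := by
          gcongr
      _ = k ^ 2 * (2 ^ (j + 1) * 2 ^ k * 2 ^ ((2 * k + 1) * k)) *
            (n ^ j * q ^ (k * (2 * k + 2))) := by
          rw [show k * (2 * k + 2) = (2 * k + 1) * k + k by ring]
          simp only [mul_pow, pow_add, ← pow_mul]
          ring
      _ = k ^ 2 * 2 ^ (2 * k ^ 2 + 4 * k) * n ^ (2 * k) := by
          rw [hqn, ← pow_succ, ← hj, ← pow_add, ← pow_add]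
          congr 3
          ring
      _ < M * n ^ (2 * k) := by
          gcongr
          rw [hM]; linarith
      _ ≤ M ^ k * n ^ (2 * k) := by
          gcongr
          exact le_self_pow₀ (by linarith) (by omega)
      _ = (M * n ^ 2) ^ k := by rw [mul_pow, ← pow_mul]
      _ ≤ (x * q) ^ k := by
          gcongr
      _ = x ^ k * q ^ k := mul_pow _ _ _

/-- For every `k ≥ 1` there are `γ_k > 0`, `μ_k > 0` and `n₀` such that:
if `A, C` are mutually avoiding `n`-point sets (`n ≥ n₀`), the lines of `A` and of `C`
avoid the convex hull of the `n`-point set `B`, and the set `T` of all collinear triples of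
`A × B × C` satisfies `|T| ≥ μ_k n^{2−γ_k}`, then `T` contains a `k`-system. -/
theorem statement6 (k : ℕ) (hk : 0 < k) :
    ∃ γ μ : ℝ, 0 < γ ∧ 0 < μ ∧ ∃ n₀ : ℕ, ∀ n : ℕ, n₀ ≤ n →
      ∀ A B C : Finset Pt, A.card = n → B.card = n → C.card = n →
        AvoidsHull A C → AvoidsHull C A → AvoidsHull A B → AvoidsHull C B →
        ∀ T : Finset (Pt × Pt × Pt),
          (∀ t : Pt × Pt × Pt,
            t ∈ T ↔ t.1 ∈ A ∧ t.2.1 ∈ B ∧ t.2.2 ∈ C ∧ Collinear ℝ {t.1, t.2.1, t.2.2}) →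
          μ * (n : ℝ) ^ ((2 : ℝ) - γ) ≤ (T.card : ℝ) →
          ∃ As Cs bs : Fin k → Fin k → Pt,
            IsKSystem A B C (T : Set (Pt × Pt × Pt)) k As Cs bs := by
  obtain hk2 | hk2 : k = 1 ∨ 2 ≤ k := by omega
  · subst hk2
    refine ⟨1, 1, one_pos, one_pos, 1, ?_⟩
    intro n hn A B C _ _ _ _ _ _ _ T hT hcard
    have hpos : (0 : ℝ) < T.card := lt_of_lt_of_le (by positivity) hcard
    obtain ⟨t, ht⟩ := Finset.card_pos.1 (by exact_mod_cast hpos)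
    obtain ⟨ha, hb, hc, -⟩ := (hT t).1 ht
    exact ⟨fun _ _ => t.1, fun _ _ => t.2.2, fun _ _ => t.2.1,
      Function.injective_of_subsingleton _, fun _ _ => ha,
      Function.injective_of_subsingleton _, fun _ _ => hc, fun _ _ => hb, fun _ _ _ => ht⟩
  set M : ℝ := k ^ 2 * 2 ^ (2 * k ^ 2 + 4 * k) + 1 with hM
  set D : ℕ := k * (2 * k + 2) with hD
  have hD0 : 0 < D := by positivity
  have hM0 : 0 < M := by positivity
  refine ⟨(D : ℝ)⁻¹, 27 * M, by positivity, by positivity, 2, ?_⟩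
  intro n hn A B C hA hB hC hAC _ hAB hCB T hT hcard
  have hn1 : (1 : ℝ) ≤ n := by exact_mod_cast (show 1 ≤ n by omega)
  have hn0 : (0 : ℝ) < n := by linarith
  set q : ℝ := (n : ℝ) ^ (D : ℝ)⁻¹ with hq
  have hq1 : 1 ≤ q := Real.one_le_rpow hn1 (by positivity)
  have hq0 : 0 < q := by linarith
  have hqn : q ^ D = n := Real.rpow_inv_natCast_pow hn0.le hD0.ne'
  rw [Real.rpow_sub hn0, ← hq, Real.rpow_two] at hcard
  -- The most popular of the 27 classes has at least `⌈|T| / 27⌉ = (|T| + 26) / 27` triples.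
  set e : ℕ := (T.card + 26) / 27 with he
  have heT : (T.card : ℝ) ≤ 27 * e := by
    have : T.card ≤ 27 * e := by omega
    exact_mod_cast this
  have hx : M * (n : ℝ) ^ 2 ≤ e * q := by
    have h := hcard.trans heT
    rw [mul_assoc, mul_le_mul_iff_right₀ (by norm_num), ← mul_div_assoc, div_le_iff₀ hq0] at h
    exact h
  obtain ⟨h1, h2⟩ := size_bounds k n hk2 (by omega) q M e hq1 hqn hM hx
  exact exists_kSystem_of_card k ⌈q⌉₊ n e hk2 (Nat.ceil_pos.2 hq0) hn A B C hA hB hC hAC hAB hCB T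
    (fun t ht => (hT t).1 ht) (by omega) (by exact_mod_cast h1) (by exact_mod_cast h2)
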